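/- Let p be a prime and let a_1, …, a_r ∈ ℤ_p. Then there exist b_1, …, b_r ∈ ℤ_p with b_i ≡ a_i (mod p) for all i such that b_1, …, b_r are algebraically independent over ℚ. -/

import Mathlib

/-!
A domain `A` faithful over a ring `R` has at most `max #R ℵ₀` elements algebraic over `R`. So, given
subsets of `A` larger than this, one can choose from each in turn an element transcendental over the
subalgebra generated by the earlier choices, along a well-order of the index set in which every
element has fewer predecessors than each subset has elements. The residue classes of a nonzero
modulus are such subsets of `ℚ_[p]`: each is in bijection with `ℤ_[p]`, so of size at least `𝔠`.
-/

open Cardinal Set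

universe u v w

theorem exists_forall_eq_image_Iio {ι : Type u} {α : Type v} [Preorder ι] [WellFoundedLT ι]
    (f : ι → Set α → α) : ∃ b : ι → α, ∀ i, b i = f i (b '' Iio i) := by
  let step (i : ι) (ih : ∀ j, j < i → α) : α := f i (range fun j : Iio i => ih j j.2)
  refine ⟨wellFounded_lt.fix step, fun i => ?_⟩
  rw [wellFounded_lt.fix_eq, image_eq_range]

section AlgebraicIndependence

variable {R : Type u} {A : Type v} [CommRing R] [CommRing A] [Algebra R A]

theorem algebraicIndependent_of_transcendental_adjoin_Iio [FaithfulSMul R A]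
    {ι : Type w} [LinearOrder ι] {x : ι → A}
    (hx : ∀ i, Transcendental (Algebra.adjoin R (x '' Iio i)) (x i)) :
    AlgebraicIndependent R x := by
  have indep_finset (t : Finset ι) : AlgebraicIndepOn R x (t : Set ι) := by
    induction t using Finset.induction_on_max with
    | empty =>
      rw [Finset.coe_empty]
      exact algebraicIndependent_empty_type_iff.mpr (FaithfulSMul.algebraMap_injective R A)
    | insert i t ht ih =>
      rw [Finset.coe_insert]
      exact ih.insert <| (hx i).of_tower_top_of_subalgebra_le <|
        Algebra.adjoin_mono <| image_mono ht
  exact algebraicIndependent_of_finite_type fun t ht => by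
    simpa only [ht.coe_toFinset] using indep_finset ht.toFinset

variable [IsDomain A]

theorem exists_mem_transcendental [FaithfulSMul R A] {s : Set A} (hs : ℵ₀ < #s)
    (hR : Cardinal.lift.{v} #R < Cardinal.lift.{u} #s) : ∃ x ∈ s, Transcendental R x := by
  have : IsDomain R := (FaithfulSMul.algebraMap_injective R A).isDomain
  by_contra! h
  have s_subset : s ⊆ {x | IsAlgebraic R x} := fun x hx => not_not.mp (h x hx)
  have card_le : Cardinal.lift.{u} #s ≤ max (Cardinal.lift.{v} #R) ℵ₀ :=
    (lift_le.mpr (mk_le_mk_of_subset s_subset)).trans (Algebraic.cardinalMk_lift_le_max R A)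
  exact card_le.not_gt (max_lt hR (aleph0_lt_lift.mpr hs))

theorem exists_mem_transcendental_adjoin {s t : Set A} (hs : ℵ₀ < #s)
    (hR : Cardinal.lift.{v} #R < Cardinal.lift.{u} #s) (ht : #t < #s) :
    ∃ x ∈ s, Transcendental (Algebra.adjoin R t) x := by
  have card_adjoin : #(Algebra.adjoin R t) < #s := lift_lt.{v, u}.mp <|
    (Algebra.lift_cardinalMk_adjoin_le R t).trans_lt <|
      max_lt (max_lt hR (lift_lt.mpr ht)) (aleph0_lt_lift.mpr hs)
  exact exists_mem_transcendental hs (lift_lt.mpr card_adjoin)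

theorem exists_algebraicIndependent_mem [FaithfulSMul R A] {ι : Type w} {s : ι → Set A}
    (hs : ∀ i, ℵ₀ < #(s i))
    (hR : ∀ i, Cardinal.lift.{v} #R < Cardinal.lift.{u} #(s i))
    (hι : ∀ i, Cardinal.lift.{v} #ι ≤ Cardinal.lift.{w} #(s i)) :
    ∃ b : ι → A, (∀ i, b i ∈ s i) ∧ AlgebraicIndependent R b := by
  obtain ⟨_, _, ord_eq⟩ := exists_ord_eq_type_lt ι
  choose! pick pick_mem pick_transcendental using fun i (t : Set A) (ht : #t < #(s i)) =>
    exists_mem_transcendental_adjoin (hs i) (hR i) ht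
  obtain ⟨b, hb⟩ := exists_forall_eq_image_Iio pick
  have card_image_Iio (i : ι) : #(b '' Iio i) < #(s i) := lift_lt.{v, w}.mp <|
    calc
      Cardinal.lift.{w} #(b '' Iio i) ≤ Cardinal.lift.{v} #(Iio i) := mk_image_le_lift
      _ < Cardinal.lift.{v} #ι := lift_lt.mpr (mk_Iio_lt i ord_eq)
      _ ≤ Cardinal.lift.{w} #(s i) := hι i
  refine ⟨b, fun i => ?_, algebraicIndependent_of_transcendental_adjoin_Iio fun i => ?_⟩
  · rw [hb]
    exact pick_mem i _ (card_image_Iio i)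
  · rw [hb i]
    exact pick_transcendental i _ (card_image_Iio i)

end AlgebraicIndependence

theorem mk_setOf_dvd_sub {R : Type u} [Ring R] [NoZeroDivisors R] {m : R} (hm : m ≠ 0) (a : R) :
    #{b | m ∣ b - a} = #R := by
  have range_eq : range (fun c => m * c + a) = {b | m ∣ b - a} := by
    ext b
    exact exists_congr fun c => eq_sub_iff_add_eq.symm.trans eq_comm
  rw [← range_eq]
  exact mk_range_eq _ ((add_left_injective a).comp (mul_right_injective₀ hm))

theorem continuum_le_mk_padicInt (p : ℕ) [Fact p.Prime] : 𝔠 ≤ #ℤ_[p] := by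
  have unit_ball_mem_nhds : {x : ℚ_[p] | ‖x‖ ≤ 1} ∈ nhds 0 := by
    simpa only [Metric.closedBall, dist_zero_right] using
      Metric.closedBall_mem_nhds (0 : ℚ_[p]) one_pos
  calc
    𝔠 ≤ #ℚ_[p] := continuum_le_cardinal_of_nontriviallyNormedField ℚ_[p]
    _ = #ℤ_[p] := (cardinal_eq_of_mem_nhds ℚ_[p] unit_ball_mem_nhds).symm

theorem exists_algebraically_independent_padic_approx_general
    (p : ℕ) [Fact p.Prime] {R : Type u} [CommRing R] [Algebra R ℚ_[p]] [FaithfulSMul R ℚ_[p]]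
    (hR : #R < 𝔠) {ι : Type w} (hι : #ι ≤ 𝔠) {m : ι → ℤ_[p]} (hm : ∀ i, m i ≠ 0)
    (a : ι → ℤ_[p]) :
    ∃ b : ι → ℤ_[p], (∀ i, m i ∣ b i - a i) ∧
      AlgebraicIndependent R (fun i => (b i : ℚ_[p])) := by
  let residueClass (i : ι) : Set ℚ_[p] := (↑) '' {b : ℤ_[p] | m i ∣ b - a i}
  have continuum_le (i : ι) : 𝔠 ≤ #(residueClass i) := by
    calc
      𝔠 ≤ #ℤ_[p] := continuum_le_mk_padicInt p
      _ = #{b | m i ∣ b - a i} := (mk_setOf_dvd_sub (hm i) (a i)).symm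
      _ = #(residueClass i) := (mk_image_eq Subtype.val_injective).symm
  obtain ⟨x, x_mem, x_indep⟩ := exists_algebraicIndependent_mem (R := R) (s := residueClass)
    (fun i => aleph0_lt_continuum.trans_le (continuum_le i))
    (fun i => (lift_lt_continuum.mpr hR).trans_le (continuum_le_lift.mpr (continuum_le i)))
    (fun i => (lift_le_continuum.mpr hι).trans (continuum_le_lift.mpr (continuum_le i)))
  choose b hb coe_b using x_mem
  exact ⟨b, hb, by simpa only [coe_b] using x_indep⟩

/-- Let `p` be a prime and `a 1, …, a r ∈ ℤ_p`. Then there exist `b 1, …, b r ∈ ℤ_p` with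
`b i ≡ a i (mod p)` for all `i` which are algebraically independent over `ℚ` (as elements
of `ℚ_p`). -/
theorem exists_algebraically_independent_padic_approx
    (p : ℕ) [Fact p.Prime] (r : ℕ) (a : Fin r → ℤ_[p]) :
    ∃ b : Fin r → ℤ_[p], (∀ i, (p : ℤ_[p]) ∣ (b i - a i)) ∧
      AlgebraicIndependent ℚ (fun i => ((b i : ℚ_[p]))) :=
  exists_algebraically_independent_padic_approx_general p
    (mk_le_aleph0.trans_lt aleph0_lt_continuum) (mk_le_aleph0.trans aleph0_le_continuum)
    (fun _ => PadicInt.prime_p.ne_zero) a
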